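/- There is a constant c such that for every rational number p/q with 0 ≤ p/q < 1 and every natural number N, there exists an incomplete table T with more than N rows over a schema R with at most c attributes, and sets X, Y ⊆ R, such that for the strongly possible functional dependency σ : X →sp Y one has g₃(σ) − g₅(σ) = p/q. -/

import Mathlib

/-- A tuple over schema `R`: assigns to each attribute either a value (`some v`)
or the missing value `⊥` (`none`). -/
abbrev Tuple (R : Type) := R → Option ℕ

/-- Tuples `t₁`, `t₂` are weakly similar on `X ⊆ R`. -/
def weaklySimilarOn {R : Type} (X : Set R) (t₁ t₂ : Tuple R) : Prop :=
  ∀ A ∈ X, t₁ A = t₂ A ∨ t₁ A = none ∨ t₂ A = none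

/-- Active domain of attribute `A` in table `T` (a table is a finite multiset of
tuples, encoded as a function from a finite index type `ι`). -/
def VD {R ι : Type} (T : ι → Tuple R) (A : R) : Set ℕ :=
  {v | ∃ i, T i A = some v}

/-- `T'` is a strongly possible world of `T`: a total table, tuple-wise weakly
similar to `T`, with all values taken from active domains of `T`. -/
def IsSpWorld {R ι : Type} (T : ι → Tuple R) (T' : ι → R → ℕ) : Prop :=
  ∀ i A, (T i A = none ∨ T i A = some (T' i A)) ∧ T' i A ∈ VD T A

/-- `K` is a strongly possible key of `T`: some spWorld has pairwise distinct
`K`-projections. -/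
def spKey {R ι : Type} (T : ι → Tuple R) (K : Set R) : Prop :=
  ∃ T', IsSpWorld T T' ∧ ∀ i j : ι, (∀ A ∈ K, T' i A = T' j A) → i = j

/-- The strongly possible functional dependency `X →sp Y` holds in `T`. -/
def spFD {R ι : Type} (T : ι → Tuple R) (X Y : Set R) : Prop :=
  ∃ T', IsSpWorld T T' ∧
    ∀ i j : ι, (∀ A ∈ X, T' i A = T' j A) → ∀ A ∈ Y, T' i A = T' j A

/-- A family `𝒦` of key candidates is satisfied simultaneously in one spWorld. -/
def spKeySystem {R ι : Type} (T : ι → Tuple R) (𝒦 : Set (Set R)) : Prop :=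
  ∃ T', IsSpWorld T T' ∧ ∀ K ∈ 𝒦, ∀ i j : ι, (∀ A ∈ K, T' i A = T' j A) → i = j

/-- `t` is `K`-total: no `⊥` in any attribute of `K`. -/
def KTotal {R : Type} (K : Set R) (t : Tuple R) : Prop := ∀ A ∈ K, t A ≠ none

/-- Minimum number of tuples to remove from `T` so that `sp⟨K⟩` holds. -/
noncomputable def g3KeyNum {R ι : Type} (T : ι → Tuple R) (K : Set R) : ℕ :=
  sInf {k : ℕ | ∃ S : Finset ι, S.card = k ∧
      spKey (fun i : {i : ι // i ∉ S} => T i.1) K}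

/-- `g₃(K)`: the minimum ratio `|S|/|T|` over subsets `S` of the tuples of `T`
whose removal makes `sp⟨K⟩` hold. -/
noncomputable def g3Key {R ι : Type} [Fintype ι] (T : ι → Tuple R) (K : Set R) : ℚ :=
  (g3KeyNum T K : ℚ) / (Fintype.card ι : ℚ)

/-- Minimum number of tuples to add to `T` so that `sp⟨K⟩` holds. -/
noncomputable def g5KeyNum {R ι : Type} (T : ι → Tuple R) (K : Set R) : ℕ :=
  sInf {p : ℕ | ∃ S : Fin p → Tuple R, spKey (Sum.elim T S) K}

/-- `g₅(K)`: the minimum ratio `|S|/|T|` over multisets `S` of added tuples such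
that `T ∪ S` satisfies `sp⟨K⟩` (active domains taken in the enlarged table). -/
noncomputable def g5Key {R ι : Type} [Fintype ι] (T : ι → Tuple R) (K : Set R) : ℚ :=
  (g5KeyNum T K : ℚ) / (Fintype.card ι : ℚ)

/-- Minimum number of tuples to remove from `T` so that `X →sp Y` holds. -/
noncomputable def g3FDNum {R ι : Type} (T : ι → Tuple R) (X Y : Set R) : ℕ :=
  sInf {k : ℕ | ∃ S : Finset ι, S.card = k ∧
      spFD (fun i : {i : ι // i ∉ S} => T i.1) X Y}

/-- `g₃(σ)` for an spFD `σ : X →sp Y`. -/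
noncomputable def g3FD {R ι : Type} [Fintype ι] (T : ι → Tuple R) (X Y : Set R) : ℚ :=
  (g3FDNum T X Y : ℚ) / (Fintype.card ι : ℚ)

/-- Minimum number of tuples to add to `T` so that `X →sp Y` holds. -/
noncomputable def g5FDNum {R ι : Type} (T : ι → Tuple R) (X Y : Set R) : ℕ :=
  sInf {p : ℕ | ∃ S : Fin p → Tuple R, spFD (Sum.elim T S) X Y}

/-- `g₅(σ)` for an spFD `σ : X →sp Y`. -/
noncomputable def g5FD {R ι : Type} [Fintype ι] (T : ι → Tuple R) (X Y : Set R) : ℚ :=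
  (g5FDNum T X Y : ℚ) / (Fintype.card ι : ℚ)

/-- Minimum number of tuples to remove from `T` so that `sp⟨𝒦⟩` holds. -/
noncomputable def g3SysNum {R ι : Type} (T : ι → Tuple R) (𝒦 : Set (Set R)) : ℕ :=
  sInf {k : ℕ | ∃ S : Finset ι, S.card = k ∧
      spKeySystem (fun i : {i : ι // i ∉ S} => T i.1) 𝒦}

/-- `g₃(𝒦)` for a system `𝒦` of strongly possible keys. -/
noncomputable def g3Sys {R ι : Type} [Fintype ι] (T : ι → Tuple R) (𝒦 : Set (Set R)) : ℚ :=
  (g3SysNum T 𝒦 : ℚ) / (Fintype.card ι : ℚ)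

/-- Adjacency in the `K`-extension graph: the (`K`-total) tuple `f` over
`∏_{A ∈ K} VD(A)` is weakly similar to `t` on `K`. -/
def adjExt {R : Type} (K : Set R) (t : Tuple R) (f : ↥K → ℕ) : Prop :=
  ∀ A : ↥K, t A.1 = none ∨ t A.1 = some (f A)

/-- The `T'`-side vertex class of the `K`-extension graph of `T`: the `K`-total
tuples over `∏_{A ∈ K} VD(A)` weakly similar on `K` to at least one tuple of `T`. -/
def extSide {R ι : Type} (T : ι → Tuple R) (K : Set R) : Set (↥K → ℕ) :=
  {f | (∀ A : ↥K, f A ∈ VD T A.1) ∧ ∃ i, adjExt K (T i) f}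

/-- A matching of the `K`-extension bipartite graph of `T`. -/
def IsExtMatching {R ι : Type} (T : ι → Tuple R) (K : Set R)
    (M : Finset (ι × (↥K → ℕ))) : Prop :=
  (∀ e ∈ M, e.2 ∈ extSide T K ∧ adjExt K (T e.1) e.2) ∧
  (∀ e ∈ M, ∀ e' ∈ M, e.1 = e'.1 → e = e') ∧
  (∀ e ∈ M, ∀ e' ∈ M, e.2 = e'.2 → e = e')

/-- `ν(G)`: the maximum size of a matching in the `K`-extension graph of `T`. -/
noncomputable def nuExt {R ι : Type} (T : ι → Tuple R) (K : Set R) : ℕ :=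
  sSup {n : ℕ | ∃ M : Finset (ι × (↥K → ℕ)), IsExtMatching T K M ∧ M.card = n}

/-- `ℓ(t)`: the number of `K`-total tuples in `∏_{A ∈ K} VD(A)` weakly similar
to `t` on `K` (the degree of `t` in the `K`-extension graph). -/
noncomputable def ellK {R ι : Type} (T : ι → Tuple R) (K : Set R) (t : Tuple R) : ℕ :=
  Set.ncard {f : ↥K → ℕ | (∀ A : ↥K, f A ∈ VD T A.1) ∧ adjExt K t f}

/-- `T_j*`: the set of `K`-total tuples over `∏_{A ∈ K} VD(A)` weakly similar on
`K` to some tuple among the first `j` tuples of `T`. -/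
def TjStar {R : Type} {m : ℕ} (T : Fin m → Tuple R) (K : Set R) (j : ℕ) : Set (↥K → ℕ) :=
  {f | (∀ A : ↥K, f A ∈ VD T A.1) ∧ ∃ i : Fin m, i.1 < j ∧ adjExt K (T i) f}

/-- `ν(G*)`: the maximum matching size of the subgraph of the `K`-extension
graph induced on `T_j ∪ T_j*`. -/
noncomputable def nuExtStar {R : Type} {m : ℕ} (T : Fin m → Tuple R) (K : Set R) (j : ℕ) : ℕ :=
  sSup {n : ℕ | ∃ M : Finset (Fin m × (↥K → ℕ)), IsExtMatching T K M ∧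
    (∀ e ∈ M, e.1.1 < j ∧ e.2 ∈ TjStar T K j) ∧ M.card = n}

/-!
Take `n` rows that are `⊥` except for pairwise distinct values in an attribute `B`, and let all
remaining rows be zero. On every attribute of the left-hand side `X` the only active value is `0`,
so each of the `n` special rows has to be removed. Adding `k` rows, on the other hand, enlarges
each active domain to at most `k + 1` values, which leaves room for `(k + 1) ^ |X|` distinct
left-hand sides; with `|X| = 2`, exactly `⌊√n⌋` added rows are needed. Since
`n - ⌊√n⌋` takes every natural value, the difference `g₃ - g₅ = (n - ⌊√n⌋) / m` over tables with
`m` rows takes every rational value in `[0, 1)`, with `m` arbitrarily large.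
-/

lemma exists_injective_apply_eq {α β : Type*} [Finite α] [Finite β]
    (h : Nat.card α ≤ Nat.card β) (a : α) (b : β) :
    ∃ f : α → β, Function.Injective f ∧ f a = b := by
  classical
  have := Fintype.ofFinite α
  have := Fintype.ofFinite β
  rw [Nat.card_eq_fintype_card, Nat.card_eq_fintype_card] at h
  obtain ⟨f⟩ := Function.Embedding.nonempty_of_card_le h
  exact ⟨Equiv.swap (f a) b ∘ f, (Equiv.injective _).comp f.injective, Equiv.swap_apply_left _ _⟩

lemma exists_eq_add_sqrt (a : ℕ) : ∃ n : ℕ, n = a + n.sqrt := by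
  have hlower : a.sqrt * a.sqrt ≤ a := a.sqrt_le
  have hupper : a < (a.sqrt + 1) * (a.sqrt + 1) := a.lt_succ_sqrt
  suffices ∃ s, s * s ≤ a + s ∧ a + s < (s + 1) * (s + 1) by
    obtain ⟨s, hs⟩ := this
    exact ⟨a + s, congrArg (a + ·) (Nat.eq_sqrt.mpr hs)⟩
  by_cases ha : a ≤ a.sqrt * a.sqrt + a.sqrt
  · exact ⟨a.sqrt, by lia, by lia⟩
  · exact ⟨a.sqrt + 1, by lia, by lia⟩

lemma lt_mul_of_eq_add_sqrt {n p q t : ℕ} (hn : n = p * t + n.sqrt) (hpq : p < q)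
    (hpt : p + 1 < t) : n < q * t := by
  have hq : p * t + t ≤ q * t := by nlinarith
  have hsqrt : n.sqrt * n.sqrt ≤ n := n.sqrt_le
  have hlt : n.sqrt < t := by
    by_contra! hge
    nlinarith
  lia

section ActiveDomain

variable {R ι κ : Type}

lemma finite_VD [Finite ι] (T : ι → Tuple R) (A : R) : (VD T A).Finite :=
  show (some ⁻¹' Set.range fun i => T i A).Finite from
    (Set.finite_range _).preimage (Option.some_injective ℕ).injOn

lemma ncard_VD_le_card [Finite ι] (T : ι → Tuple R) (A : R) :
    (VD T A).ncard ≤ Nat.card ι := by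
  choose row hrow using fun v : VD T A => v.2
  refine Nat.card_le_card_of_injective row fun v w hvw => Subtype.ext ?_
  exact Option.some_injective ℕ (by rw [← hrow v, ← hrow w, hvw])

lemma VD_sumElim (T : ι → Tuple R) (S : κ → Tuple R) (A : R) :
    VD (Sum.elim T S) A = VD T A ∪ VD S A := by
  ext v
  simp [VD]

lemma IsSpWorld.eq_of_eq_some {T : ι → Tuple R} {T' : ι → R → ℕ} (hT' : IsSpWorld T T')
    {i : ι} {A : R} {v : ℕ} (h : T i A = some v) : T' i A = v := by
  simpa [h, eq_comm] using (hT' i A).1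

lemma spFD.ncard_VD_le_prod [Finite ι] {T : ι → Tuple R} {X : Finset R} {B : R}
    (h : spFD T X {B}) : (VD T B).ncard ≤ ∏ A ∈ X, (VD T A).ncard := by
  obtain ⟨T', hT', hFD⟩ := h
  choose row hrow using fun v : VD T B => v.2
  have (A : R) : Finite (VD T A) := finite_VD T A
  have hinj : Function.Injective fun (v : VD T B) (A : X) =>
      (⟨T' (row v) A, (hT' (row v) A).2⟩ : VD T A) := by
    intro v w hvw
    have hX : ∀ A ∈ X, T' (row v) A = T' (row w) A := fun A hA =>
      congrArg Subtype.val (congrFun hvw ⟨A, hA⟩)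
    have hB := hFD (row v) (row w) hX B rfl
    rw [hT'.eq_of_eq_some (hrow v), hT'.eq_of_eq_some (hrow w)] at hB
    exact Subtype.ext hB
  calc (VD T B).ncard ≤ Nat.card (∀ A : X, VD T A) := Nat.card_le_card_of_injective _ hinj
    _ = ∏ A ∈ X, (VD T A).ncard := by
      rw [Nat.card_pi]
      exact X.prod_coe_sort fun A => (VD T A).ncard

end ActiveDomain

section LabelTable

variable {R ι : Type} [DecidableEq R]

/-- The table whose row `i` carries the label `ℓ i` in the attribute `B`; in all other attributes
the rows labelled `0` are `0` and the remaining rows are missing. -/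
def labelTable (B : R) (ℓ : ι → ℕ) : ι → Tuple R := fun i A =>
  if A = B then some (ℓ i) else if ℓ i = 0 then some 0 else none

variable {A B : R} {ℓ : ι → ℕ}

lemma labelTable_label (i : ι) : labelTable B ℓ i B = some (ℓ i) := by
  simp [labelTable]

lemma labelTable_of_eq_zero {i : ι} (hi : ℓ i = 0) (A : R) : labelTable B ℓ i A = some 0 := by
  simp [labelTable, hi]

lemma labelTable_eq_some_iff (hA : A ≠ B) {i : ι} {v : ℕ} :
    labelTable B ℓ i A = some v ↔ ℓ i = 0 ∧ v = 0 := by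
  simp [labelTable, hA, eq_comm]

lemma VD_labelTable_label : VD (labelTable B ℓ) B = Set.range ℓ := by
  ext v
  simp [VD, labelTable_label]

lemma VD_labelTable_subset (hA : A ≠ B) : VD (labelTable B ℓ) A ⊆ {0} := by
  rintro v ⟨i, hi⟩
  exact ((labelTable_eq_some_iff hA).mp hi).2

lemma spFD_labelTable_of_eq_zero (hℓ : ∀ i, ℓ i = 0) (X Y : Set R) :
    spFD (labelTable B ℓ) X Y :=
  ⟨fun _ _ => 0, fun i A => ⟨.inr (labelTable_of_eq_zero (hℓ i) A), i,
    labelTable_of_eq_zero (hℓ i) A⟩, fun _ _ _ _ _ => rfl⟩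

lemma spFD.eq_zero_of_labelTable {X : Set R} (hX : X.Nonempty) (hB : B ∉ X)
    (h : spFD (labelTable B ℓ) X {B}) (i : ι) : ℓ i = 0 := by
  obtain ⟨T', hT', hFD⟩ := h
  have hne : ∀ A ∈ X, A ≠ B := fun A hA hAB => hB (hAB ▸ hA)
  have hzero : ∀ j, ∀ A ∈ X, T' j A = 0 := fun j A hA =>
    VD_labelTable_subset (hne A hA) (hT' j A).2
  obtain ⟨A, hA⟩ := hX
  obtain ⟨j, hj⟩ := (hT' i A).2
  have hℓj : ℓ j = 0 := ((labelTable_eq_some_iff (hne A hA)).mp hj).1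
  have hij := hFD i j (fun C hC => (hzero i C hC).trans (hzero j C hC).symm) B rfl
  rwa [hT'.eq_of_eq_some (labelTable_label i), hT'.eq_of_eq_some (labelTable_label j), hℓj] at hij

theorem g3FDNum_labelTable [Fintype ι] {X : Set R} (hX : X.Nonempty) (hB : B ∉ X) :
    g3FDNum (labelTable B ℓ) X {B} = (Finset.univ.filter fun i => ℓ i ≠ 0).card := by
  refine IsLeast.csInf_eq ⟨⟨_, rfl, ?_⟩, ?_⟩
  · refine spFD_labelTable_of_eq_zero (ℓ := fun i : {i : ι // i ∉ _} => ℓ i) (fun i => ?_) X {B}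
    simpa using i.2
  · rintro _ ⟨S, rfl, hS⟩
    refine Finset.card_le_card fun i hi => ?_
    by_contra hiS
    exact (Finset.mem_filter.mp hi).2
      (spFD.eq_zero_of_labelTable (ℓ := fun i : {i : ι // i ∉ S} => ℓ i) hX hB hS ⟨i, hiS⟩)

lemma ncard_range_le_of_spFD_sumElim [Finite ι] {X : Finset R} (hB : B ∉ X) {k : ℕ}
    {S : Fin k → Tuple R} (h : spFD (Sum.elim (labelTable B ℓ) S) X {B}) :
    (Set.range ℓ).ncard ≤ (k + 1) ^ X.card := by
  have hVD : ∀ A ∈ X, (VD (Sum.elim (labelTable B ℓ) S) A).ncard ≤ k + 1 := by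
    intro A hA
    have hAB : A ≠ B := fun hAB => hB (hAB ▸ hA)
    calc (VD (Sum.elim (labelTable B ℓ) S) A).ncard
        ≤ (VD (labelTable B ℓ) A).ncard + (VD S A).ncard := by
          rw [VD_sumElim]
          exact Set.ncard_union_le _ _
      _ ≤ 1 + k := add_le_add
          ((Set.ncard_le_ncard (VD_labelTable_subset hAB)).trans_eq (Set.ncard_singleton 0))
          ((ncard_VD_le_card S A).trans_eq (Nat.card_fin k))
      _ = k + 1 := add_comm 1 k
  calc (Set.range ℓ).ncard
      ≤ (VD (Sum.elim (labelTable B ℓ) S) B).ncard := by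
        refine Set.ncard_le_ncard ?_ (finite_VD _ B)
        rw [VD_sumElim, VD_labelTable_label]
        exact Set.subset_union_left
    _ ≤ ∏ A ∈ X, (VD (Sum.elim (labelTable B ℓ) S) A).ncard := h.ncard_VD_le_prod
    _ ≤ (k + 1) ^ X.card := Finset.prod_le_pow_card _ _ _ hVD

/-- The `k` rows added to a `labelTable`: row `j` is constantly `j + 1` on `X`, so that together
with `0` these rows make `0, …, k` available in every attribute of `X`. -/
def diagonalRows (X : Finset R) (k : ℕ) : Fin k → Tuple R := fun j A =>
  if A ∈ X then some (j + 1) else none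

lemma zero_mem_VD_sumElim_labelTable {κ : Type} (h0 : 0 ∈ Set.range ℓ) (S : κ → Tuple R)
    (A : R) : 0 ∈ VD (Sum.elim (labelTable B ℓ) S) A := by
  obtain ⟨i, hi⟩ := h0
  exact ⟨.inl i, labelTable_of_eq_zero hi A⟩

lemma mem_VD_sumElim_diagonalRows (h0 : 0 ∈ Set.range ℓ) {X : Finset R} (hA : A ∈ X) {k : ℕ}
    (v : Fin (k + 1)) : (v : ℕ) ∈ VD (Sum.elim (labelTable B ℓ) (diagonalRows X k)) A := by
  cases v using Fin.cases with
  | zero => exact zero_mem_VD_sumElim_labelTable h0 _ A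
  | succ j => exact ⟨.inr j, by simp [diagonalRows, hA]⟩

/-- The total row with projection `v` to `X`, value `b` in the attribute `B ∉ X`, and `0` in all
other attributes. -/
def totalRow (B : R) {X : Finset R} {k : ℕ} (v : X → Fin (k + 1)) (b : ℕ) : R → ℕ := fun A =>
  if hA : A ∈ X then v ⟨A, hA⟩ else if A = B then b else 0

lemma labelTable_eq_none_or_eq_totalRow {X : Finset R} (hB : B ∉ X) {k : ℕ}
    {v : X → Fin (k + 1)} {i : ι} (hv : ℓ i = 0 → v = 0) (A : R) :
    labelTable B ℓ i A = none ∨ labelTable B ℓ i A = some (totalRow B v (ℓ i) A) := by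
  by_cases hAB : A = B
  · simp [labelTable, totalRow, hAB, hB]
  · by_cases hi : ℓ i = 0 <;> simp [labelTable, totalRow, hAB, hi, hv]

lemma diagonalRows_eq_none_or_eq_totalRow (X : Finset R) {k : ℕ} (j : Fin k) (b : ℕ) (A : R) :
    diagonalRows X k j A = none ∨
      diagonalRows X k j A = some (totalRow B (fun _ : X => j.succ) b A) := by
  by_cases hA : A ∈ X <;> simp [diagonalRows, totalRow, hA]

lemma totalRow_mem_VD (h0 : 0 ∈ Set.range ℓ) {X : Finset R} {k : ℕ} (v : X → Fin (k + 1)) {b : ℕ}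
    (hb : b ∈ Set.range ℓ) (A : R) :
    totalRow B v b A ∈ VD (Sum.elim (labelTable B ℓ) (diagonalRows X k)) A := by
  unfold totalRow
  split_ifs with hA hAB
  · exact mem_VD_sumElim_diagonalRows h0 hA _
  · subst hAB
    rw [VD_sumElim, VD_labelTable_label]
    exact .inl hb
  · exact zero_mem_VD_sumElim_labelTable h0 _ A

-- Distinct labels receive distinct codes in `{0, …, k} ^ X`, and every row, including the added
-- ones, takes as its value in `B` the label decoded from its projection to `X`.
lemma spFD_sumElim_diagonalRows [Finite ι] (h0 : 0 ∈ Set.range ℓ) {X : Finset R} (hB : B ∉ X)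
    {k : ℕ} (hk : (Set.range ℓ).ncard ≤ (k + 1) ^ X.card) :
    spFD (Sum.elim (labelTable B ℓ) (diagonalRows X k)) X {B} := by
  have hcard : Nat.card (Set.range ℓ) ≤ Nat.card (X → Fin (k + 1)) := by
    simpa [Nat.card_fun] using hk
  obtain ⟨code, hcode, hcode0⟩ := exists_injective_apply_eq hcard ⟨0, h0⟩ 0
  have : Nonempty (Set.range ℓ) := ⟨⟨0, h0⟩⟩
  let decode : (X → Fin (k + 1)) → Set.range ℓ := Function.invFun code
  have hdecode : ∀ b, decode (code b) = b := Function.leftInverse_invFun hcode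
  let proj : ι ⊕ Fin k → X → Fin (k + 1) :=
    Sum.elim (fun i => code ⟨ℓ i, i, rfl⟩) fun j _ => j.succ
  refine ⟨fun x => totalRow B (proj x) (decode (proj x)),
    fun x A => ⟨?_, totalRow_mem_VD h0 (proj x) (decode (proj x)).2 A⟩, ?_⟩
  · rcases x with i | j
    · have hzero : ℓ i = 0 → proj (.inl i) = 0 := fun hi => by simp [proj, hi, hcode0]
      have hlabel : (decode (proj (.inl i)) : ℕ) = ℓ i := congrArg Subtype.val (hdecode _)
      simp only [Sum.elim_inl, hlabel]
      exact labelTable_eq_none_or_eq_totalRow hB hzero A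
    · exact diagonalRows_eq_none_or_eq_totalRow X j _ A
  · intro x y hxy A _
    have hproj : proj x = proj y := by
      funext C
      simpa [totalRow, Fin.val_inj] using hxy C C.2
    simp only [hproj]

theorem g5FDNum_labelTable [Finite ι] (h0 : 0 ∈ Set.range ℓ) {X : Finset R} (hB : B ∉ X) :
    g5FDNum (labelTable B ℓ) X {B} = sInf {k | (Set.range ℓ).ncard ≤ (k + 1) ^ X.card} :=
  congrArg sInf <| Set.ext fun k =>
    ⟨fun ⟨_, hS⟩ => ncard_range_le_of_spFD_sumElim hB hS,
      fun hk => ⟨diagonalRows X k, spFD_sumElim_diagonalRows h0 hB hk⟩⟩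

end LabelTable

section TruncatedLabel

/-- The labelling of `m` rows by `0, 1, …, n, 0, …, 0`. -/
def truncatedLabel (n m : ℕ) (i : Fin m) : ℕ := if i.1 ≤ n then i else 0

variable {n m : ℕ}

lemma range_truncatedLabel (h : n < m) : Set.range (truncatedLabel n m) = Set.Iic n := by
  ext v
  constructor
  · rintro ⟨i, rfl⟩
    unfold truncatedLabel
    split_ifs with hi
    exacts [hi, n.zero_le]
  · exact fun hv => ⟨⟨v, lt_of_le_of_lt hv h⟩, if_pos hv⟩

lemma truncatedLabel_ne_zero_iff {i : Fin m} :
    truncatedLabel n m i ≠ 0 ↔ i.1 ∈ Finset.Icc 1 n := by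
  rw [truncatedLabel, Finset.mem_Icc]
  split_ifs <;> lia

lemma card_truncatedLabel_ne_zero (h : n < m) :
    (Finset.univ.filter fun i => truncatedLabel n m i ≠ 0).card = n := by
  have hmap : (Finset.univ.filter fun i => truncatedLabel n m i ≠ 0).map Fin.valEmbedding
      = Finset.Icc 1 n := by
    ext v
    simp only [Finset.mem_map, Finset.mem_filter_univ, truncatedLabel_ne_zero_iff,
      Fin.valEmbedding_apply]
    constructor
    · rintro ⟨i, hi, rfl⟩
      exact hi
    · exact fun hv => ⟨⟨v, (Finset.mem_Icc.mp hv).2.trans_lt h⟩, hv, rfl⟩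
  rw [← Finset.card_map Fin.valEmbedding, hmap, Nat.card_Icc, Nat.add_sub_cancel]

variable {R : Type} [DecidableEq R] {B : R} {X : Finset R}

lemma g5FDNum_labelTable_truncatedLabel (h : n < m) (hB : B ∉ X) (hX : X.card = 2) :
    g5FDNum (labelTable B (truncatedLabel n m)) X {B} = n.sqrt := by
  have hrange := range_truncatedLabel h
  have hncard : (Set.Iic n).ncard = n + 1 := by
    rw [← Finset.coe_Iic, Set.ncard_coe_finset, Nat.card_Iic]
  have hset : {k | n + 1 ≤ (k + 1) ^ 2} = Set.Ici n.sqrt := by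
    ext k
    exact Nat.sqrt_lt'.symm.trans Nat.lt_succ_iff
  rw [g5FDNum_labelTable (hrange ▸ Set.mem_Iic.mpr n.zero_le) hB, hrange, hncard, hX, hset,
    csInf_Ici]

theorem g3FD_sub_g5FD_labelTable_truncatedLabel (h : n < m) (hB : B ∉ X) (hX : X.card = 2) :
    g3FD (labelTable B (truncatedLabel n m)) X {B} - g5FD (labelTable B (truncatedLabel n m)) X {B}
      = ((n : ℚ) - n.sqrt) / m := by
  have hne : (X : Set R).Nonempty := Finset.coe_nonempty.mpr (Finset.card_pos.mp (by lia))
  rw [g3FD, g5FD, g3FDNum_labelTable hne hB, card_truncatedLabel_ne_zero h,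
    g5FDNum_labelTable_truncatedLabel h hB hX, Fintype.card_fin, sub_div]

end TruncatedLabel

/-- There is a constant `c` such that for every rational
`0 ≤ p/q < 1` and every `N` there is a table with more than `N` rows over a
schema with at most `c` attributes and sets `X, Y` with
`g₃(X →sp Y) − g₅(X →sp Y) = p/q`. -/
theorem stmt4 :
    ∃ c : ℕ, ∀ p q : ℕ, 0 < q → p < q → ∀ N : ℕ,
      ∃ m : ℕ, N < m ∧ ∃ r : ℕ, r ≤ c ∧ ∃ T : Fin m → Tuple (Fin r),
        ∃ X Y : Set (Fin r), g3FD T X Y - g5FD T X Y = (p : ℚ) / q := by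
  refine ⟨3, fun p q hq hpq N => ?_⟩
  let t := N + p + 2
  obtain ⟨n, hn⟩ := exists_eq_add_sqrt (p * t)
  have hnm : n < q * t := lt_mul_of_eq_add_sqrt hn hpq (by lia)
  have hNm : N < q * t := lt_of_lt_of_le (by lia) (Nat.le_mul_of_pos_left t hq)
  have hgap : (n : ℚ) - n.sqrt = p * t := sub_eq_of_eq_add (mod_cast hn)
  have ht : (t : ℚ) ≠ 0 := by positivity
  refine ⟨q * t, hNm, 3, le_rfl, labelTable 2 (truncatedLabel n (q * t)),
    ({0, 1} : Finset (Fin 3)), {2}, ?_⟩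
  rw [g3FD_sub_g5FD_labelTable_truncatedLabel hnm (by decide) (by decide), hgap, Nat.cast_mul,
    mul_div_mul_right _ _ ht]
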